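/- Let a generalized open maps situation be given and let 𝔼' be a subgraph of 𝔼 (with the same objects V) that generates 𝔼, i.e., every morphism of 𝔼 is a finite composite of morphisms of 𝔼'. Assume additionally that for every e ∈ 𝔼' and s ∈ 𝕊 for which J_E e ∘ J_S s is defined, there exist s' ∈ 𝕊 and e' ∈ 𝔼' with J_E e ∘ J_S s = J_S s' ∘ J_E e'. Then: (1) any morphism of 𝕄 satisfying the (𝔼,𝕊)-openness lifting property for all morphisms e in 𝔼' is (𝔼,𝕊)-open; (2) any set of spans satisfying the conditions of a (strong) path simulation with 𝔼 replaced by 𝔼' is a (strong) path simulation. -/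

import Mathlib

/-!
Both the lifting property and the simulation condition for a composite `e₁ ≫ ⋯ ≫ eₙ` of generators
are obtained by treating the generators one at a time.  Lifting along the first generator leaves an
`𝕊`-morphism `s` in front of the remaining ones, so the right induction hypothesis concerns the
composites `J_𝕊 s ≫ J_𝔼 g` with `s` in `𝕊` arbitrary and `g` generated.  If `g = e ≫ g'` with `e` in
`𝔼'`, the swap condition turns `s ≫ e` into `e' ≫ s'` with `e'` in `𝔼'`; the hypothesis applies to
`e'` and yields a further `𝕊`-morphism `s₁`, and `s₁ ≫ s'` is the new `s` in front of `g'`.  This is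
`PathCat.lift_of_genBy` for openness and `PathCat.sim_of_genBy` for path simulations; the case
where `s` is an identity gives the theorem.  Closure under precomposition with `𝔼` needs no
swapping (`PathCat.precomp_of_genBy`).
-/

open CategoryTheory

/-- A generalized open maps situation over a category `M` and an object assignment
`J : V → M`: a small category with set of objects `V` together with the action on
morphisms of a functor into `M` that acts as `J` on objects.  A pair of such data
`(𝔼, 𝕊)` (on the same `V` and `J`) is exactly a generalized open maps situation. -/
structure PathCat (V : Type*) {M : Type*} [Category M] (J : V → M) where
  Hom : V → V → Type*
  id : ∀ v, Hom v v
  comp : ∀ {u v w : V}, Hom u v → Hom v w → Hom u w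
  id_comp : ∀ {v w : V} (f : Hom v w), comp (id v) f = f
  comp_id : ∀ {v w : V} (f : Hom v w), comp f (id w) = f
  assoc : ∀ {a b c d : V} (f : Hom a b) (g : Hom b c) (h : Hom c d),
    comp (comp f g) h = comp f (comp g h)
  map : ∀ {v w : V}, Hom v w → (J v ⟶ J w)
  map_id : ∀ v, map (id v) = 𝟙 (J v)
  map_comp : ∀ {u v w : V} (f : Hom u v) (g : Hom v w), map (comp f g) = map f ≫ map g

/-- `f : X ⟶ Y` is `(𝔼,𝕊)`-open: every commutative square `J_𝔼 e ≫ y = x ≫ f`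
(with `e : v ⟶ w` in `𝔼`) admits a generalized lifting `e' : v ⟶ u` in `𝔼`,
`s : u ⟶ w` in `𝕊`, `x' : J u ⟶ X` with `J_𝔼 e' ≫ x' = x`, `J_𝔼 e' ≫ J_𝕊 s = J_𝔼 e`
and `x' ≫ f = J_𝕊 s ≫ y`. -/
def PathCat.IsOpen {V : Type*} {M : Type*} [Category M] {J : V → M}
    (E S : PathCat V J) {X Y : M} (f : X ⟶ Y) : Prop :=
  ∀ ⦃v w : V⦄ (e : E.Hom v w) (x : J v ⟶ X) (y : J w ⟶ Y),
    E.map e ≫ y = x ≫ f →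
    ∃ (u : V) (e' : E.Hom v u) (s : S.Hom u w) (x' : J u ⟶ X),
      E.map e' ≫ x' = x ∧ E.map e' ≫ S.map s = E.map e ∧ x' ≫ f = S.map s ≫ y

open Limits

variable {V : Type*} {M : Type*} [Category M] {J : V → M}

/-- The lifting property of `(𝔼,𝕊)`-openness with respect to a single morphism
`e : v ⟶ w` of `𝔼`. -/
def PathCat.LiftsAlong (E S : PathCat V J) {X Y : M} (f : X ⟶ Y)
    {v w : V} (e : E.Hom v w) : Prop :=
  ∀ (x : J v ⟶ X) (y : J w ⟶ Y),
    E.map e ≫ y = x ≫ f →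
    ∃ (u : V) (e' : E.Hom v u) (s : S.Hom u w) (x' : J u ⟶ X),
      E.map e' ≫ x' = x ∧ E.map e' ≫ S.map s = E.map e ∧ x' ≫ f = S.map s ≫ y

/-- `GenBy E E' e` holds when the morphism `e` of `𝔼` is a finite composition of
morphisms of the subgraph `𝔼'`. -/
inductive PathCat.GenBy (E : PathCat V J) (E' : ∀ v w : V, Set (E.Hom v w)) :
    ∀ {v w : V}, E.Hom v w → Prop
  | id (v : V) : PathCat.GenBy E E' (E.id v)
  | comp {u v w : V} (e : E.Hom u v) (he : e ∈ E' u v) {g : E.Hom v w}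
      (hg : PathCat.GenBy E E' g) : PathCat.GenBy E E' (E.comp e g)

/-- A path simulation from `A` to `B`, with `𝔼` replaced by the subgraph `𝔼'`. Taking
`E' v w = Set.univ` recovers the usual notion of path simulation. -/
def PathCat.IsPathSimOn (E S : PathCat V J) (E' : ∀ v w : V, Set (E.Hom v w))
    {A B : M} (z : V) (hz : IsInitial (J z))
    (R : Set ((v : V) × ((J v ⟶ A) × (J v ⟶ B)))) : Prop :=
  (⟨z, hz.to A, hz.to B⟩ ∈ R) ∧
  ∀ ⦃v : V⦄ ⦃a : J v ⟶ A⦄ ⦃b : J v ⟶ B⦄, (⟨v, a, b⟩ : (v : V) × ((J v ⟶ A) × (J v ⟶ B))) ∈ R →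
    ∀ ⦃w : V⦄ (e : E.Hom v w), e ∈ E' v w → ∀ (a' : J w ⟶ A), a = E.map e ≫ a' →
      ∃ (u : V) (e' : E.Hom v u), e' ∈ E' v u ∧
      ∃ (s : S.Hom u w) (b' : J u ⟶ B),
        E.map e = E.map e' ≫ S.map s ∧ b = E.map e' ≫ b' ∧
        (⟨u, S.map s ≫ a', b'⟩ : (v : V) × ((J v ⟶ A) × (J v ⟶ B))) ∈ R

/-- A strong path simulation with `𝔼` replaced by `𝔼'`. -/
def PathCat.IsStrongPathSimOn (E S : PathCat V J) (E' : ∀ v w : V, Set (E.Hom v w))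
    {A B : M} (z : V) (hz : IsInitial (J z))
    (R : Set ((v : V) × ((J v ⟶ A) × (J v ⟶ B)))) : Prop :=
  E.IsPathSimOn S E' z hz R ∧
  ∀ ⦃v : V⦄ ⦃a : J v ⟶ A⦄ ⦃b : J v ⟶ B⦄, (⟨v, a, b⟩ : (v : V) × ((J v ⟶ A) × (J v ⟶ B))) ∈ R →
    ∀ ⦃w : V⦄ (e : E.Hom w v), e ∈ E' w v →
      (⟨w, E.map e ≫ a, E.map e ≫ b⟩ : (v : V) × ((J v ⟶ A) × (J v ⟶ B))) ∈ R

/-- The usual (strong) path simulations, as the unrestricted case. -/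
def PathCat.IsPathSim (E S : PathCat V J) {A B : M} (z : V) (hz : IsInitial (J z))
    (R : Set ((v : V) × ((J v ⟶ A) × (J v ⟶ B)))) : Prop :=
  E.IsPathSimOn S (fun _ _ => Set.univ) z hz R

def PathCat.IsStrongPathSim (E S : PathCat V J) {A B : M} (z : V) (hz : IsInitial (J z))
    (R : Set ((v : V) × ((J v ⟶ A) × (J v ⟶ B)))) : Prop :=
  E.IsStrongPathSimOn S (fun _ _ => Set.univ) z hz R

/-- The lifting property on generators extends to `J_𝕊 s ≫ J_𝔼 g` for `g` a composite of generators.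
The arbitrary `s` is what makes the induction on `g` go through. -/
theorem PathCat.lift_of_genBy (E S : PathCat V J) (E' : ∀ v w : V, Set (E.Hom v w))
    (hswap : ∀ ⦃u v w : V⦄ (s : S.Hom u v) (e : E.Hom v w), e ∈ E' v w →
      ∃ (u' : V) (e' : E.Hom u u') (s' : S.Hom u' w), e' ∈ E' u u' ∧
        S.map s ≫ E.map e = E.map e' ≫ S.map s')
    {X Y : M} (f : X ⟶ Y)
    (hf : ∀ ⦃v w : V⦄ (e : E.Hom v w), e ∈ E' v w → E.LiftsAlong S f e)
    {v w : V} {g : E.Hom v w} (hg : E.GenBy E' g) :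
    ∀ {u : V} (s : S.Hom u v) (x : J u ⟶ X) (y : J w ⟶ Y),
      S.map s ≫ E.map g ≫ y = x ≫ f →
      ∃ (u' : V) (e' : E.Hom u u') (s' : S.Hom u' w) (x' : J u' ⟶ X),
        E.map e' ≫ x' = x ∧ E.map e' ≫ S.map s' = S.map s ≫ E.map g ∧
        x' ≫ f = S.map s' ≫ y := by
  induction hg with
  | id v =>
    intro u s x y h
    exact ⟨u, E.id u, s, x, by simp [E.map_id], by simp [E.map_id],
      by simpa [E.map_id] using h.symm⟩
  | comp e he _ ih =>
    rename_i g _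
    intro u s x y h
    obtain ⟨u', e', s', he', hs⟩ := hswap s e he
    obtain ⟨u₁, e₁, s₁, x₁, h₁, h₂, h₃⟩ := hf e' he' x (S.map s' ≫ E.map g ≫ y) (by
      rw [← h, E.map_comp, Category.assoc, ← reassoc_of% hs])
    obtain ⟨u₂, e₂, s₂, x₂, k₁, k₂, k₃⟩ := ih (S.comp s₁ s') x₁ y (by
      rw [h₃, S.map_comp, Category.assoc])
    refine ⟨u₂, E.comp e₁ e₂, s₂, x₂, ?_, ?_, k₃⟩
    · rw [E.map_comp, Category.assoc, k₁, h₁]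
    · rw [E.map_comp, Category.assoc, k₂, S.map_comp, Category.assoc, reassoc_of% h₂,
        E.map_comp, reassoc_of% hs]

/-- The simulation condition on generators extends to `J_𝕊 s ≫ J_𝔼 g` for `g` a composite of
generators.  The arbitrary `s` is what makes the induction on `g` go through. -/
theorem PathCat.sim_of_genBy (E S : PathCat V J) (E' : ∀ v w : V, Set (E.Hom v w))
    (hswap : ∀ ⦃u v w : V⦄ (s : S.Hom u v) (e : E.Hom v w), e ∈ E' v w →
      ∃ (u' : V) (e' : E.Hom u u') (s' : S.Hom u' w), e' ∈ E' u u' ∧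
        S.map s ≫ E.map e = E.map e' ≫ S.map s')
    {A B : M} {z : V} {hz : IsInitial (J z)} {R : Set ((v : V) × ((J v ⟶ A) × (J v ⟶ B)))}
    (hR : E.IsPathSimOn S E' z hz R)
    {v w : V} {g : E.Hom v w} (hg : E.GenBy E' g) :
    ∀ {u : V} (s : S.Hom u v) (a : J u ⟶ A) (b : J u ⟶ B) (a' : J w ⟶ A),
      (⟨u, a, b⟩ : (v : V) × ((J v ⟶ A) × (J v ⟶ B))) ∈ R →
      a = S.map s ≫ E.map g ≫ a' →
      ∃ (u' : V) (e' : E.Hom u u') (s' : S.Hom u' w) (b' : J u' ⟶ B),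
        S.map s ≫ E.map g = E.map e' ≫ S.map s' ∧ b = E.map e' ≫ b' ∧
        (⟨u', S.map s' ≫ a', b'⟩ : (v : V) × ((J v ⟶ A) × (J v ⟶ B))) ∈ R := by
  induction hg with
  | id v =>
    intro u s a b a' hab h
    rw [E.map_id, Category.id_comp] at h
    subst h
    exact ⟨u, E.id u, s, b, by simp [E.map_id], by simp [E.map_id], hab⟩
  | comp e he _ ih =>
    rename_i g _
    intro u s a b a' hab h
    obtain ⟨u', e', s', he', hs⟩ := hswap s e he
    obtain ⟨u₁, e₁, -, s₁, b₁, h₁, h₂, h₃⟩ := hR.2 hab e' he' (S.map s' ≫ E.map g ≫ a') (by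
      rw [h, E.map_comp, Category.assoc, ← reassoc_of% hs])
    obtain ⟨u₂, e₂, s₂, b₂, k₁, k₂, k₃⟩ := ih (S.comp s₁ s') _ b₁ a' h₃ (by
      rw [S.map_comp, Category.assoc])
    refine ⟨u₂, E.comp e₁ e₂, s₂, b₂, ?_, ?_, k₃⟩
    · rw [E.map_comp, E.map_comp, Category.assoc, ← k₁, S.map_comp, Category.assoc,
        reassoc_of% hs, h₁, Category.assoc]
    · rw [E.map_comp, Category.assoc, ← k₂, h₂]

theorem PathCat.precomp_of_genBy (E : PathCat V J) (E' : ∀ v w : V, Set (E.Hom v w))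
    {A B : M} {R : Set ((v : V) × ((J v ⟶ A) × (J v ⟶ B)))}
    (hR : ∀ ⦃v : V⦄ ⦃a : J v ⟶ A⦄ ⦃b : J v ⟶ B⦄,
      (⟨v, a, b⟩ : (v : V) × ((J v ⟶ A) × (J v ⟶ B))) ∈ R →
      ∀ ⦃w : V⦄ (e : E.Hom w v), e ∈ E' w v →
        (⟨w, E.map e ≫ a, E.map e ≫ b⟩ : (v : V) × ((J v ⟶ A) × (J v ⟶ B))) ∈ R)
    {w v : V} {g : E.Hom w v} (hg : E.GenBy E' g) :
    ∀ (a : J v ⟶ A) (b : J v ⟶ B),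
      (⟨v, a, b⟩ : (v : V) × ((J v ⟶ A) × (J v ⟶ B))) ∈ R →
      (⟨w, E.map g ≫ a, E.map g ≫ b⟩ : (v : V) × ((J v ⟶ A) × (J v ⟶ B))) ∈ R := by
  induction hg with
  | id v =>
    intro a b hab
    simpa only [E.map_id, Category.id_comp] using hab
  | comp e he _ ih =>
    intro a b hab
    simpa only [E.map_comp, Category.assoc] using hR (ih a b hab) e he

/-- Checking openness, and the path simulation conditions, on a generating subgraph
`𝔼'` of `𝔼` suffices, provided `𝕊`-morphisms can be swapped past `𝔼'`-morphisms. -/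
theorem PathCat.generators (E S : PathCat V J) (E' : ∀ v w : V, Set (E.Hom v w))
    (hgen : ∀ ⦃v w : V⦄ (e : E.Hom v w), E.GenBy E' e)
    (hswap : ∀ ⦃u v w : V⦄ (s : S.Hom u v) (e : E.Hom v w), e ∈ E' v w →
      ∃ (u' : V) (e' : E.Hom u u') (s' : S.Hom u' w), e' ∈ E' u u' ∧
        S.map s ≫ E.map e = E.map e' ≫ S.map s')
    (z : V) (hz : IsInitial (J z)) :
    (∀ ⦃X Y : M⦄ (f : X ⟶ Y),
        (∀ ⦃v w : V⦄ (e : E.Hom v w), e ∈ E' v w → E.LiftsAlong S f e) → E.IsOpen S f) ∧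
    (∀ (A B : M) (R : Set ((v : V) × ((J v ⟶ A) × (J v ⟶ B)))),
        E.IsPathSimOn S E' z hz R → E.IsPathSim S z hz R) ∧
    (∀ (A B : M) (R : Set ((v : V) × ((J v ⟶ A) × (J v ⟶ B)))),
        E.IsStrongPathSimOn S E' z hz R → E.IsStrongPathSim S z hz R) := by
  have hsim : ∀ (A B : M) (R : Set ((v : V) × ((J v ⟶ A) × (J v ⟶ B)))),
      E.IsPathSimOn S E' z hz R → E.IsPathSim S z hz R := by
    intro A B R hR
    refine ⟨hR.1, fun v a b hab w e _ a' ha => ?_⟩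
    obtain ⟨u, e', s, b', h₁, h₂, h₃⟩ :=
      E.sim_of_genBy S E' hswap hR (hgen e) (S.id v) a b a' hab (by
        rw [S.map_id, Category.id_comp, ha])
    rw [S.map_id, Category.id_comp] at h₁
    exact ⟨u, e', Set.mem_univ _, s, b', h₁, h₂, h₃⟩
  refine ⟨fun X Y f hf v w e x y h => ?_, hsim, fun A B R hR => ⟨hsim A B R hR.1, ?_⟩⟩
  · simpa only [S.map_id, Category.id_comp] using
      E.lift_of_genBy S E' hswap f hf (hgen e) (S.id v) x y (by
        rw [S.map_id, Category.id_comp, h])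
  · exact fun v a b hab w e _ => E.precomp_of_genBy E' hR.2 (hgen e) a b hab
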